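/- Let p and q be distinct primes, H a nontrivial finite abelian p-group with exp(H) = p^k, m a positive integer, and G = H ⊕ C_{q^m}. If U is a minimal zero-sum sequence over G with k(U) = K(G), then U = g · U_p · U_q where g is a single element of order p^k q^m = exp(G), U_p is a zero-sum free sequence over the p-primary component H ⊕ {0} of G, and U_q is a zero-sum free sequence over the q-primary component {0} ⊕ C_{q^m} of G. -/

import Mathlib

/-- The cross number `k(S)` of a sequence (finite multiset) `S` over an additive group:
the sum, with multiplicity, of the reciprocals of the orders of its elements. -/
noncomputable def crossNum {G : Type*} [AddCommGroup G] (S : Multiset G) : ℝ :=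
  (S.map fun g => ((addOrderOf g : ℝ))⁻¹).sum

/-- `S` is zero-sum free: no nonempty sub-multiset of `S` has sum `0`. -/
def IsZeroSumFree {G : Type*} [AddCommGroup G] (S : Multiset G) : Prop :=
  ∀ T : Multiset G, T ≤ S → T ≠ 0 → T.sum ≠ 0

/-- The little cross number `k(G)`: the maximal cross number of a zero-sum free
sequence over `G`. -/
noncomputable def littleK (G : Type*) [AddCommGroup G] : ℝ :=
  sSup {x : ℝ | ∃ S : Multiset G, IsZeroSumFree S ∧ crossNum S = x}

/-- `S` is a minimal zero-sum sequence: nonempty, sum zero, and no nonempty proper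
sub-multiset has sum `0`. -/
def IsMinZeroSum {G : Type*} [AddCommGroup G] (S : Multiset G) : Prop :=
  S ≠ 0 ∧ S.sum = 0 ∧ ∀ T : Multiset G, T ≤ S → T ≠ 0 → T ≠ S → T.sum ≠ 0

/-- The cross number `K(G)`: the maximal cross number of a minimal zero-sum
sequence over `G`. -/
noncomputable def bigK (G : Type*) [AddCommGroup G] : ℝ :=
  sSup {x : ℝ | ∃ S : Multiset G, IsMinZeroSum S ∧ crossNum S = x}

open Multiset in
theorem exists_le_of_le_map {α β : Type*} (f : α → β) (S : Multiset α) (Y : Multiset β)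
    (h : Y ≤ S.map f) : ∃ S' ≤ S, Y = S'.map f := by
  induction S using Quotient.inductionOn with | _ l =>
  induction Y using Quotient.inductionOn with | _ y =>
  obtain ⟨l1, h1, h2⟩ := h
  obtain ⟨l', h3, h4⟩ := List.sublist_map_iff.1 h2
  refine ⟨(l' : Multiset α), h3.subperm, ?_⟩
  subst h4
  exact (Quotient.sound h1).symm

theorem exists_split_le {α : Type*} (A B T : Multiset α) (h : T ≤ A + B) :
    ∃ T1 T2, T1 ≤ A ∧ T2 ≤ B ∧ T = T1 + T2 := by
  classical
  refine ⟨T ∩ A, T - A, Multiset.inter_le_right, tsub_le_iff_left.2 h, ?_⟩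
  ext a
  simp only [Multiset.count_add, Multiset.count_inter, Multiset.count_sub]
  omega

section basics
variable {G : Type*} [AddCommGroup G]

theorem crossNum_add (S T : Multiset G) : crossNum (S + T) = crossNum S + crossNum T := by
  simp [crossNum]

theorem crossNum_cons (g : G) (T : Multiset G) :
    crossNum (g ::ₘ T) = ((addOrderOf g : ℝ))⁻¹ + crossNum T := by
  simp [crossNum]

theorem crossNum_zero : crossNum (0 : Multiset G) = 0 := by
  simp [crossNum]

theorem crossNum_replicate (n : ℕ) (g : G) :
    crossNum (Multiset.replicate n g) = n * ((addOrderOf g : ℝ))⁻¹ := by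
  simp [crossNum]

theorem crossNum_nonneg (S : Multiset G) : 0 ≤ crossNum S := by
  apply Multiset.sum_nonneg
  intro x hx
  obtain ⟨g, _, rfl⟩ := Multiset.mem_map.1 hx
  positivity

theorem IsZeroSumFree.mono {S T : Multiset G} (hS : IsZeroSumFree S) (h : T ≤ S) :
    IsZeroSumFree T := fun X hX => hS X (hX.trans h)

theorem isZeroSumFree_zero : IsZeroSumFree (0 : Multiset G) := by
  intro T hT h0
  exact absurd (Multiset.le_zero.1 hT) h0

theorem IsZeroSumFree.eq_zero {S : Multiset G} (hS : IsZeroSumFree S) (h : S.sum = 0) : S = 0 := by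
  by_contra h0
  exact hS S le_rfl h0 h

/-- A proper subsequence of a minimal zero-sum sequence is zero-sum free. -/
theorem IsMinZeroSum.free {g : G} {S T : Multiset G} (hS : IsMinZeroSum S) (h : g ::ₘ T ≤ S) :
    IsZeroSumFree T := by
  intro X hX h0
  apply hS.2.2 X (hX.trans ((Multiset.le_cons_self _ _).trans h)) h0
  rintro rfl
  have h1 := Multiset.card_le_card (h.trans hX)
  simp at h1

theorem IsZeroSumFree.minZeroSum {S : Multiset G} (hS : IsZeroSumFree S) :
    IsMinZeroSum ((-S.sum) ::ₘ S) := by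
  refine ⟨by simp, by simp, ?_⟩
  intro T hT h0 h1 hs
  classical
  by_cases hm : T ≤ S
  · exact hS T hm h0 hs
  · have hmem : -S.sum ∈ T := by
      by_contra hn
      exact hm ((Multiset.le_cons_of_notMem hn).1 hT)
    obtain ⟨T', rfl⟩ := Multiset.exists_cons_of_mem hmem
    have hT' : T' ≤ S := (Multiset.cons_le_cons_iff _).1 hT
    obtain ⟨W, rfl⟩ := Multiset.le_iff_exists_add.1 hT'
    have hW : W.sum = 0 := by
      simp at hs
      exact hs
    have := (hS.mono (Multiset.le_add_left W T')).eq_zero hW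
    subst this
    simp at h1

theorem isZeroSumFree_replicate {n : ℕ} {g : G} (h : n < addOrderOf g) :
    IsZeroSumFree (Multiset.replicate n g) := by
  intro T hT h0
  obtain ⟨j, hj, rfl⟩ := Multiset.le_replicate_iff.1 hT
  rw [Multiset.sum_replicate]
  intro hs
  have := addOrderOf_dvd_of_nsmul_eq_zero hs
  have h1 : j ≠ 0 := by rintro rfl; simp at h0
  have := Nat.le_of_dvd (by omega) this
  omega

/-- All zero-sum free and minimal zero-sum sequences lie in a finite set. -/
theorem exists_bound [Finite G] : ∃ s : Finset (Multiset G),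
    ∀ S : Multiset G, (IsZeroSumFree S ∨ IsMinZeroSum S) → S ∈ s := by
  classical
  cases nonempty_fintype G
  refine ⟨(Multiset.powerset (∑ g : G, Multiset.replicate (addOrderOf g) g)).toFinset, ?_⟩
  intro S hS
  rw [Multiset.mem_toFinset, Multiset.mem_powerset, Multiset.le_iff_count]
  intro g
  rw [Multiset.count_sum']
  simp only [Multiset.count_replicate]
  simp only [Finset.sum_ite_eq', Finset.mem_univ, if_true]
  by_contra hlt
  push Not at hlt
  have hle : g ::ₘ Multiset.replicate (addOrderOf g) g ≤ S := by
    have := Multiset.le_count_iff_replicate_le.1 (Nat.succ_le_of_lt hlt)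
    simpa using this
  have hf : IsZeroSumFree (Multiset.replicate (addOrderOf g) g) := by
    rcases hS with hS | hS
    · exact hS.mono ((Multiset.le_cons_self _ _).trans hle)
    · exact hS.free hle
  have := hf.eq_zero (by simp [addOrderOf_nsmul_eq_zero])
  have h2 := congrArg Multiset.card this
  simp at h2
  have := (isOfFinAddOrder_of_finite g)
  exact h2 this

theorem le_bigK [Finite G] {S : Multiset G} (hS : IsMinZeroSum S) : crossNum S ≤ bigK G := by
  obtain ⟨s, hs⟩ := exists_bound (G := G)
  refine le_csSup ?_ ⟨S, hS, rfl⟩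
  refine ((s.finite_toSet).image crossNum).bddAbove.mono ?_
  rintro x ⟨T, hT, rfl⟩
  exact ⟨T, hs T (Or.inr hT), rfl⟩

theorem exists_max_free [Finite G] : ∃ S : Multiset G, IsZeroSumFree S ∧
    ∀ T : Multiset G, IsZeroSumFree T → crossNum T ≤ crossNum S := by
  obtain ⟨s, hs⟩ := exists_bound (G := G)
  have hfin : {S : Multiset G | IsZeroSumFree S}.Finite :=
    s.finite_toSet.subset fun T hT => hs T (Or.inl hT)
  obtain ⟨S, hS, h⟩ := Set.exists_max_image _ crossNum hfin ⟨0, isZeroSumFree_zero⟩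
  exact ⟨S, hS, h⟩

/-- `K(A) ≤ k(A) + 1 / exp(A)` for a `p`-group `A`. -/
theorem minZeroSum_le (p k : ℕ) (hp : p.Prime) (e : G) (he : addOrderOf e = p ^ k)
    (hord : ∀ g : G, ∃ a ≤ k, addOrderOf g = p ^ a) (B : ℝ)
    (hB : ∀ T : Multiset G, IsZeroSumFree T → crossNum T ≤ B)
    (S : Multiset G) (hS : IsMinZeroSum S) : crossNum S ≤ B + ((p : ℝ) ^ k)⁻¹ := by
  classical
  have hne : S.toFinset.Nonempty := by
    rw [Multiset.toFinset_nonempty]; exact hS.1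
  obtain ⟨g, hg, hmax⟩ := Finset.exists_max_image S.toFinset addOrderOf hne
  rw [Multiset.mem_toFinset] at hg
  obtain ⟨S', rfl⟩ := Multiset.exists_cons_of_mem hg
  obtain ⟨a, hak, ha⟩ := hord g
  have hkill : ∀ x ∈ S', p ^ a • x = 0 := by
    intro x hx
    obtain ⟨b, _, hb⟩ := hord x
    have h1 := hmax x (by simp [hx])
    rw [ha, hb] at h1
    have h2 : b ≤ a := (Nat.pow_le_pow_iff_right hp.one_lt).1 h1
    apply addOrderOf_dvd_iff_nsmul_eq_zero.1
    rw [hb]; exact pow_dvd_pow _ h2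
  have hppos : 0 < p ^ (k - a) := Nat.pow_pos hp.pos
  have hfree : IsZeroSumFree (S' + Multiset.replicate (p ^ (k - a) - 1) e) := by
    intro T hT h0 hs
    obtain ⟨T1, T2, h1, h2, rfl⟩ := exists_split_le _ _ _ hT
    obtain ⟨j, hj, rfl⟩ := Multiset.le_replicate_iff.1 h2
    rw [Multiset.sum_add, Multiset.sum_replicate] at hs
    have hT1 : p ^ a • T1.sum = 0 := by
      have hh := Multiset.sum_map_nsmul (m := T1) (f := fun x => x) (n := p ^ a)
      rw [Multiset.map_id'] at hh
      rw [← hh]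
      apply Multiset.sum_eq_zero
      intro x hx
      obtain ⟨y, hy, rfl⟩ := Multiset.mem_map.1 hx
      exact hkill y (Multiset.mem_of_le h1 hy)
    have hj0 : (p ^ a * j) • e = 0 := by
      have := congrArg (fun z => p ^ a • z) hs
      simp only [smul_add, hT1, zero_add, smul_zero] at this
      rw [mul_smul]; exact this
    have hd := addOrderOf_dvd_of_nsmul_eq_zero hj0
    rw [he, ← Nat.add_sub_cancel' hak, pow_add] at hd
    have hd' : p ^ (k - a) ∣ j := Nat.dvd_of_mul_dvd_mul_left (Nat.pow_pos hp.pos) hd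
    have hj1 : j = 0 := by
      by_contra hne
      have := Nat.le_of_dvd (by omega) hd'
      omega
    subst hj1
    simp only [Multiset.replicate_zero, add_zero, zero_smul] at hs h0
    exact hS.free le_rfl T1 h1 h0 hs
  have := hB _ hfree
  rw [crossNum_add, crossNum_replicate, he] at this
  rw [crossNum_cons, ha]
  have hp0 : (p : ℝ) ≠ 0 := by exact_mod_cast hp.ne_zero
  have e1 : ((p ^ (k - a) - 1 : ℕ) : ℝ) * (((p ^ k : ℕ) : ℝ))⁻¹
      = ((p : ℝ) ^ a)⁻¹ - ((p : ℝ) ^ k)⁻¹ := by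
    rw [Nat.cast_sub (by omega)]
    push_cast
    have : (p : ℝ) ^ k = p ^ (k - a) * p ^ a := by
      rw [← pow_add, Nat.sub_add_cancel hak]
    rw [this]
    field_simp
  rw [e1] at this
  push_cast
  linarith

end basics

section cyclic

theorem coeff_zero_of_free {A F : Type*} [AddCommGroup A] [Field F] (S : Multiset A) :
    (∀ x, (S.map fun c => (1 - AddMonoidAlgebra.single c 1 : AddMonoidAlgebra F A)).prod.coeff x ≠ 0 →
      ∃ T ≤ S, T.sum = x) ∧ (IsZeroSumFree S →
      (S.map fun c => (1 - AddMonoidAlgebra.single c 1 : AddMonoidAlgebra F A)).prod.coeff 0 = 1) := by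
  induction S using Multiset.induction_on with
  | empty =>
    refine ⟨fun x hx => ⟨0, le_rfl, ?_⟩, fun _ => by simp⟩
    by_contra h
    classical
    apply hx
    have h' : (0 : A) ≠ x := by simpa using h
    rw [Multiset.map_zero, Multiset.prod_zero, AddMonoidAlgebra.one_def,
      AddMonoidAlgebra.coeff_single, Finsupp.single_apply, if_neg h']
  | cons c S ih =>
    have key : ∀ x, (Multiset.map (fun c => (1 - AddMonoidAlgebra.single c 1 :
          AddMonoidAlgebra F A)) (c ::ₘ S)).prod.coeff x =
        (S.map fun c => (1 - AddMonoidAlgebra.single c 1 : AddMonoidAlgebra F A)).prod.coeff x -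
        (S.map fun c => (1 - AddMonoidAlgebra.single c 1 :
          AddMonoidAlgebra F A)).prod.coeff (-c + x) := by
      intro x
      rw [Multiset.map_cons, Multiset.prod_cons, sub_mul, one_mul, AddMonoidAlgebra.coeff_sub,
        Finsupp.sub_apply, AddMonoidAlgebra.coeff_single_mul_apply, one_mul]
    refine ⟨fun x hx => ?_, fun hf => ?_⟩
    · rw [key] at hx
      by_cases h1 : (S.map fun c => (1 - AddMonoidAlgebra.single c 1 :
          AddMonoidAlgebra F A)).prod.coeff x = 0
      · rw [h1, zero_sub, neg_ne_zero] at hx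
        obtain ⟨T, hT, hs⟩ := ih.1 _ hx
        exact ⟨c ::ₘ T, Multiset.cons_le_cons _ hT, by rw [Multiset.sum_cons, hs]; abel⟩
      · obtain ⟨T, hT, hs⟩ := ih.1 _ h1
        exact ⟨T, hT.trans (Multiset.le_cons_self _ _), hs⟩
    · rw [key, ih.2 (hf.mono (Multiset.le_cons_self _ _))]
      rw [sub_eq_self]
      by_contra h1
      obtain ⟨T, hT, hs⟩ := ih.1 _ h1
      refine hf (c ::ₘ T) (Multiset.cons_le_cons _ hT) (by simp) ?_
      rw [Multiset.sum_cons, hs]; abel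

theorem crossNum_zmod_le (q m : ℕ) (hq : q.Prime) (S : Multiset (ZMod (q ^ m)))
    (hS : IsZeroSumFree S) : crossNum S ≤ 1 - ((q : ℝ) ^ m)⁻¹ := by
  have : Fact q.Prime := ⟨hq⟩
  have : NeZero (q ^ m) := ⟨(Nat.pow_pos hq.pos).ne'⟩
  let A := AddMonoidAlgebra (ZMod q) (ZMod (q ^ m))
  have : CharP A q := charP_of_injective_algebraMap (algebraMap (ZMod q) A).injective q
  let t : A := AddMonoidAlgebra.single 1 1
  have htpow : ∀ n : ℕ, t ^ n = AddMonoidAlgebra.single (n : ZMod (q ^ m)) 1 := by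
    intro n
    have := AddMonoidAlgebra.single_pow (1 : ZMod (q ^ m)) (1 : ZMod q) n
    rw [one_pow, nsmul_one] at this
    exact this
  have ht0 : (1 - t) ^ (q ^ m) = 0 := by
    rw [sub_pow_char_pow, htpow, one_pow, ZMod.natCast_self]
    exact sub_self _
  have hordpos : ∀ c : ZMod (q ^ m), 0 < addOrderOf c := fun c => addOrderOf_pos c
  have horddvd : ∀ c : ZMod (q ^ m), addOrderOf c ∣ q ^ m := by
    intro c
    apply addOrderOf_dvd_of_nsmul_eq_zero
    rw [nsmul_eq_mul, ZMod.natCast_self, zero_mul]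
  have hdvd : ∀ c : ZMod (q ^ m), (1 - t) ^ (q ^ m / addOrderOf c) ∣
      (1 - AddMonoidAlgebra.single c 1 : A) := by
    intro c
    obtain ⟨b, hb, hbo⟩ := (Nat.dvd_prime_pow hq).1 (horddvd c)
    have h1 : q ^ m / addOrderOf c = q ^ (m - b) := by
      rw [hbo, Nat.pow_div hb hq.pos]
    have h2 : q ^ (m - b) ∣ c.val := by
      have h3 : q ^ b • c = 0 := by rw [← hbo]; exact addOrderOf_nsmul_eq_zero c
      rw [nsmul_eq_mul] at h3
      have h4 : ((q ^ b * c.val : ℕ) : ZMod (q ^ m)) = 0 := by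
        rw [Nat.cast_mul, ZMod.natCast_zmod_val]; exact h3
      rw [ZMod.natCast_eq_zero_iff] at h4
      have h7 : q ^ m = q ^ b * q ^ (m - b) := by rw [← pow_add, Nat.add_sub_cancel' hb]
      generalize c.val = v at h4
      rw [h7] at h4
      exact Nat.dvd_of_mul_dvd_mul_left (Nat.pow_pos hq.pos) h4
    obtain ⟨u, hu⟩ := h2
    have h5 : (AddMonoidAlgebra.single c 1 : A) = (t ^ u) ^ q ^ (m - b) := by
      rw [← pow_mul, mul_comm, ← hu, htpow, ZMod.natCast_zmod_val]
    have h6 : (1 - AddMonoidAlgebra.single c 1 : A) = (1 - t ^ u) ^ q ^ (m - b) := by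
      rw [sub_pow_char_pow, one_pow, h5]
    rw [h1, h6]
    apply pow_dvd_pow_of_dvd
    simpa using sub_dvd_pow_sub_pow (1 : A) t u
  have hprod : ∀ S : Multiset (ZMod (q ^ m)),
      (1 - t) ^ (S.map fun c => q ^ m / addOrderOf c).sum ∣
        (S.map fun c => (1 - AddMonoidAlgebra.single c 1 : A)).prod := by
    intro S
    induction S using Multiset.induction_on with
    | empty => simp
    | cons c S ih =>
      rw [Multiset.map_cons, Multiset.map_cons, Multiset.sum_cons, Multiset.prod_cons, pow_add]
      exact mul_dvd_mul (hdvd c) ih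
  have hcross : ∀ S : Multiset (ZMod (q ^ m)),
      crossNum S * (q : ℝ) ^ m = ((S.map fun c => q ^ m / addOrderOf c).sum : ℕ) := by
    intro S
    induction S using Multiset.induction_on with
    | empty => simp [crossNum]
    | cons c S ih =>
      rw [Multiset.map_cons, Multiset.sum_cons, crossNum_cons, add_mul, ih, Nat.cast_add,
        Nat.cast_div (horddvd c) (by exact_mod_cast (hordpos c).ne')]
      push_cast
      ring
  have hlt : (S.map fun c => q ^ m / addOrderOf c).sum < q ^ m := by
    by_contra hge
    push Not at hge
    have h0 : (S.map fun c => (1 - AddMonoidAlgebra.single c 1 : A)).prod = 0 := by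
      have := (pow_dvd_pow (1 - t) hge).trans (hprod S)
      rw [ht0] at this
      exact zero_dvd_iff.1 this
    have h1 := (coeff_zero_of_free (F := ZMod q) S).2 hS
    rw [h0] at h1
    simp at h1
  have hqpos : (0 : ℝ) < (q : ℝ) ^ m := by
    have : (0 : ℝ) < q := by exact_mod_cast hq.pos
    positivity
  have h2 : crossNum S * (q : ℝ) ^ m ≤ (q : ℝ) ^ m - 1 := by
    rw [hcross]
    have : (((S.map fun c => q ^ m / addOrderOf c).sum + 1 : ℕ) : ℝ) ≤ ((q ^ m : ℕ) : ℝ) := by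
      exact_mod_cast hlt
    push_cast at this ⊢
    linarith
  have h3 : crossNum S ≤ ((q : ℝ) ^ m - 1) / (q : ℝ) ^ m := by
    rw [le_div_iff₀ hqpos]; exact h2
  rwa [sub_div, div_self hqpos.ne', one_div] at h3

end cyclic

section blocks
variable {H C : Type*} [AddCommGroup H] [AddCommGroup C]

/-- the `C`-cross number of a sequence over `H × C` -/
noncomputable def kC (T : Multiset (H × C)) : ℝ := crossNum (T.map Prod.snd)

/-- the sequence over `H` of the `H`-parts of the sums of the blocks -/
def hSums (B : Multiset (Multiset (H × C))) : Multiset H := B.map fun T => T.sum.1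

theorem kC_add (S T : Multiset (H × C)) : kC (S + T) = kC S + kC T := by
  simp [kC, crossNum_add]

theorem kC_nonneg (S : Multiset (H × C)) : 0 ≤ kC S := crossNum_nonneg _

theorem hSums_add (S T : Multiset (Multiset (H × C))) : hSums (S + T) = hSums S + hSums T := by
  simp [hSums]

theorem sum_fst (T : Multiset (H × C)) : T.sum.1 = (T.map Prod.fst).sum :=
  map_multiset_sum (AddMonoidHom.fst H C) T

theorem sum_snd (T : Multiset (H × C)) : T.sum.2 = (T.map Prod.snd).sum :=
  map_multiset_sum (AddMonoidHom.snd H C) T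

/-- Extraction of minimal blocks whose `C`-sum vanishes. -/
theorem extract (V : Multiset (H × C)) : ∃ (B : Multiset (Multiset (H × C))) (R : Multiset (H × C)),
    V = B.sum + R ∧ (∀ T ∈ B, IsMinZeroSum (T.map Prod.snd)) ∧ IsZeroSumFree (R.map Prod.snd) := by
  induction hn : Multiset.card V using Nat.strong_induction_on generalizing V with | _ n ih =>
  by_cases hf : IsZeroSumFree (V.map Prod.snd)
  · exact ⟨0, V, by simp, by simp, hf⟩
  · have hex : ∃ N, ∃ T ≤ V, T ≠ 0 ∧ (T.map Prod.snd).sum = 0 ∧ Multiset.card T = N := by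
      unfold IsZeroSumFree at hf
      push Not at hf
      obtain ⟨Y, hY, h0, hs⟩ := hf
      obtain ⟨T, hT, rfl⟩ := exists_le_of_le_map _ _ _ hY
      exact ⟨_, T, hT, by rintro rfl; simp at h0, hs, rfl⟩
    classical
    obtain ⟨T, hT, h0, hs, hc⟩ := Nat.find_spec hex
    have hmin : IsMinZeroSum (T.map Prod.snd) := by
      refine ⟨by simpa using h0, hs, ?_⟩
      intro Y hY hY0 hne hYs
      obtain ⟨T', hT', rfl⟩ := exists_le_of_le_map _ _ _ hY
      have hlt : Multiset.card T' < Nat.find hex := by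
        rw [← hc]
        apply Multiset.card_lt_card
        refine lt_of_le_of_ne hT' ?_
        rintro rfl
        exact hne rfl
      exact Nat.find_min hex hlt ⟨T', hT'.trans hT, by rintro rfl; simp at hY0, hYs, rfl⟩
    obtain ⟨V', rfl⟩ := Multiset.le_iff_exists_add.1 hT
    have hTpos : 0 < Multiset.card T := Multiset.card_pos.2 h0
    obtain ⟨B, R, hV, hB, hR⟩ := ih (Multiset.card V') (by rw [← hn, Multiset.card_add]; omega) V' rfl
    refine ⟨T ::ₘ B, R, by rw [hV, Multiset.sum_cons, add_assoc], ?_, hR⟩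
    intro X hX
    rcases Multiset.mem_cons.1 hX with rfl | hX
    · exact hmin
    · exact hB X hX

theorem mem_sum_of_mem {B : Multiset (Multiset (H × C))} {T : Multiset (H × C)} (h : T ∈ B) :
    T ≤ B.sum := by
  obtain ⟨B', rfl⟩ := Multiset.exists_cons_of_mem h
  rw [Multiset.sum_cons]
  exact Multiset.le_add_right _ _

theorem kC_blocks_le (hCmin : ∀ S : Multiset C, IsMinZeroSum S → crossNum S ≤ 1)
    (B : Multiset (Multiset (H × C))) (hB : ∀ T ∈ B, IsMinZeroSum (T.map Prod.snd)) :
    kC B.sum ≤ Multiset.card B := by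
  induction B using Multiset.induction_on with
  | empty => simp [kC, crossNum_zero]
  | cons T B ih =>
    rw [Multiset.sum_cons, kC_add, Multiset.card_cons]
    have h1 : kC T ≤ 1 := hCmin _ (hB T (by simp))
    have h2 := ih fun X hX => hB X (by simp [hX])
    push_cast
    linarith

theorem card_le_hSums (N : ℕ) (hN : 0 < N)
    (B : Multiset (Multiset (H × C))) (hB : ∀ x ∈ B.sum, addOrderOf x.1 ∣ N) :
    (N : ℝ)⁻¹ * Multiset.card B ≤ crossNum (hSums B) := by
  induction B using Multiset.induction_on with
  | empty => simp [hSums, crossNum_zero]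
  | cons T B ih =>
    have h2 := ih fun x hx => hB x (by rw [Multiset.sum_cons]; exact Multiset.mem_add.2 (Or.inr hx))
    have h3 : addOrderOf T.sum.1 ∣ N := by
      apply addOrderOf_dvd_of_nsmul_eq_zero
      rw [sum_fst, ← Multiset.sum_map_nsmul]
      apply Multiset.sum_eq_zero
      intro y hy
      obtain ⟨x, hx, rfl⟩ := Multiset.mem_map.1 hy
      apply addOrderOf_dvd_iff_nsmul_eq_zero.1
      exact hB x (by rw [Multiset.sum_cons]; exact Multiset.mem_add.2 (Or.inl hx))
    have h4 : (N : ℝ)⁻¹ ≤ (addOrderOf T.sum.1 : ℝ)⁻¹ := by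
      apply inv_anti₀
      · exact_mod_cast Nat.pos_of_dvd_of_pos h3 hN
      · exact_mod_cast Nat.le_of_dvd hN h3
    rw [Multiset.card_cons]
    unfold hSums at h2 ⊢
    rw [Multiset.map_cons, crossNum_cons]
    push_cast
    linarith

theorem crossNum_level (hcop : ∀ x : H × C, addOrderOf x = addOrderOf x.1 * addOrderOf x.2)
    (N : ℕ) (V : Multiset (H × C)) (hV : ∀ x ∈ V, addOrderOf x.1 = N) :
    crossNum V = (N : ℝ)⁻¹ * kC V := by
  induction V using Multiset.induction_on with
  | empty => simp [kC, crossNum_zero]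
  | cons x V ih =>
    rw [crossNum_cons, ih fun y hy => hV y (by simp [hy]), hcop, hV x (by simp)]
    unfold kC
    rw [Multiset.map_cons, crossNum_cons]
    push_cast
    rw [mul_inv]
    ring

/-- The blocks form a minimal zero-sum sequence over `H`. -/
theorem hSums_min (U : Multiset (H × C)) (hU : IsMinZeroSum U)
    (B : Multiset (Multiset (H × C))) (hB : ∀ T ∈ B, IsMinZeroSum (T.map Prod.snd))
    (hBU : B.sum = U) : IsMinZeroSum (hSums B) := by
  have hne : ∀ T ∈ B, T ≠ 0 := by
    rintro T hT rfl
    exact (hB _ hT).1 (by simp)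
  have hsum : ∀ D ≤ B, D.sum.sum = ((hSums D).sum, 0) := by
    intro D hD
    have hD' : ∀ T ∈ D, IsMinZeroSum (T.map Prod.snd) := fun T hT => hB T (Multiset.mem_of_le hD hT)
    clear hD
    induction D using Multiset.induction_on with
    | empty => simp [hSums]; rfl
    | cons T D ih =>
      rw [Multiset.sum_cons, Multiset.sum_add, ih fun X hX => hD' X (by simp [hX])]
      have h2 : T.sum.2 = 0 := by rw [sum_snd]; exact (hD' T (by simp)).2.1
      ext
      · simp [hSums]
      · simp [h2]
  refine ⟨?_, ?_, ?_⟩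
  · intro h
    have : B = 0 := by simpa [hSums] using h
    subst this
    exact hU.1 (by simpa using hBU.symm)
  · have := hsum B le_rfl
    rw [hBU, hU.2.1] at this
    exact (congrArg Prod.fst this).symm
  · intro Y hY h0 hne' hs
    obtain ⟨D, hD, rfl⟩ := exists_le_of_le_map _ _ _ hY
    have h1 := hsum D hD
    change (hSums D).sum = 0 at hs
    rw [hs] at h1
    obtain ⟨D', rfl⟩ := Multiset.le_iff_exists_add.1 hD
    refine hU.2.2 D.sum ?_ ?_ ?_ h1
    · rw [← hBU, Multiset.sum_add]; exact Multiset.le_add_right _ _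
    · intro h2
      have hD0 : D ≠ 0 := by rintro rfl; simp at h0
      obtain ⟨T, hT⟩ := Multiset.exists_mem_of_ne_zero hD0
      have h3 := mem_sum_of_mem hT
      rw [h2] at h3
      exact hne T (by simp [hT]) (Multiset.le_zero.1 h3)
    · intro h2
      rw [← hBU, Multiset.sum_add] at h2
      have h3 : D'.sum = 0 := by simpa using h2
      have hD0 : D' ≠ 0 := by rintro rfl; simp [hSums] at hne'
      obtain ⟨T, hT⟩ := Multiset.exists_mem_of_ne_zero hD0
      have h4 := mem_sum_of_mem hT
      rw [h3] at h4
      exact hne T (by simp [hT]) (Multiset.le_zero.1 h4)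

/-- Completion inequality. -/
theorem completion (p k : ℕ) (hp : p.Prime) (θ : ℝ)
    (hCfree : ∀ S : Multiset C, IsZeroSumFree S → crossNum S ≤ θ)
    (hCmin : ∀ S : Multiset C, IsMinZeroSum S → crossNum S ≤ 1)
    (hcop : ∀ x : H × C, addOrderOf x = addOrderOf x.1 * addOrderOf x.2) (d : ℕ) :
    ∀ (l : ℕ), l + d = k → ∀ R V : Multiset (H × C), IsZeroSumFree (R.map Prod.snd) →
    (∀ x ∈ R, addOrderOf x.1 ∣ p ^ l) →
    (∀ x ∈ V, ∃ a, l ≤ a ∧ a ≤ k ∧ addOrderOf x.1 = p ^ a) →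
    ((R + V).map Prod.snd).sum = 0 →
    ∃ B : Multiset (Multiset (H × C)), B.sum = R + V ∧
      (∀ T ∈ B, IsMinZeroSum (T.map Prod.snd)) ∧
      crossNum V + ((p : ℝ) ^ l)⁻¹ * kC R ≤
        crossNum (hSums B) + (((p : ℝ) ^ l)⁻¹ - ((p : ℝ) ^ k)⁻¹) * θ := by
  have hp0 : (0 : ℝ) < p := by exact_mod_cast hp.pos
  induction d with
  | zero =>
    intro l hl R V hR hRl hV hs
    obtain rfl : l = k := by omega
    obtain ⟨B, R', hBR, hB, hR'⟩ := extract (R + V)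
    have hR0 : R' = 0 := by
      have h1 : (B.sum.map Prod.snd).sum = 0 := by
        clear hBR
        induction B using Multiset.induction_on with
        | empty => simp
        | cons T B ih =>
          rw [Multiset.sum_cons, Multiset.map_add, Multiset.sum_add, (hB T (by simp)).2.1,
            ih fun X hX => hB X (by simp [hX]), add_zero]
      rw [hBR, Multiset.map_add, Multiset.sum_add, h1, zero_add] at hs
      simpa using hR'.eq_zero hs
    subst hR0
    rw [add_zero] at hBR
    refine ⟨B, hBR.symm, hB, ?_⟩
    have hV' : ∀ x ∈ V, addOrderOf x.1 = p ^ l := by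
      intro x hx
      obtain ⟨a, h1, h2, h3⟩ := hV x hx
      obtain rfl : a = l := by omega
      exact h3
    have h1 := crossNum_level hcop _ V hV'
    have h2 := kC_blocks_le hCmin B hB
    have h3 := card_le_hSums (p ^ l) (Nat.pow_pos hp.pos) B (by
      rw [← hBR]
      intro x hx
      rcases Multiset.mem_add.1 hx with hx | hx
      · exact hRl x hx
      · rw [hV' x hx])
    rw [← hBR, kC_add] at h2
    push_cast at h1 h3
    have h4 : (0 : ℝ) < ((p : ℝ) ^ l)⁻¹ := by positivity
    have h5 := mul_le_mul_of_nonneg_left h2 h4.le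
    rw [h1, sub_self, zero_mul]
    linarith
  | succ d ih =>
    intro l hl R V hR hRl hV hs
    classical
    let V1 := V.filter fun x => addOrderOf x.1 = p ^ l
    let V2 := V.filter fun x => ¬ addOrderOf x.1 = p ^ l
    have hVV : V1 + V2 = V := Multiset.filter_add_not _ _
    have hV1 : ∀ x ∈ V1, addOrderOf x.1 = p ^ l := fun x hx => (Multiset.mem_filter.1 hx).2
    have hV2 : ∀ x ∈ V2, ∃ a, l + 1 ≤ a ∧ a ≤ k ∧ addOrderOf x.1 = p ^ a := by
      intro x hx
      obtain ⟨hx1, hx2⟩ := Multiset.mem_filter.1 hx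
      obtain ⟨a, h1, h2, h3⟩ := hV x hx1
      refine ⟨a, ?_, h2, h3⟩
      by_contra hlt
      obtain rfl : a = l := by omega
      exact hx2 h3
    obtain ⟨B, R', hBR, hB, hR'⟩ := extract (R + V1)
    have hB0 : (B.sum.map Prod.snd).sum = 0 := by
      clear hBR
      induction B using Multiset.induction_on with
      | empty => simp
      | cons T B ih =>
        rw [Multiset.sum_cons, Multiset.map_add, Multiset.sum_add, (hB T (by simp)).2.1,
          ih fun X hX => hB X (by simp [hX]), add_zero]
    have hRV1 : ∀ x ∈ R + V1, addOrderOf x.1 ∣ p ^ l := by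
      intro x hx
      rcases Multiset.mem_add.1 hx with hx | hx
      · exact hRl x hx
      · rw [hV1 x hx]
    rw [hBR] at hRV1
    obtain ⟨B2, hB2, hB2m, hineq⟩ := ih (l + 1) (by omega) R' V2 hR' (by
      intro x hx
      exact (hRV1 x (Multiset.mem_add.2 (Or.inr hx))).trans (pow_dvd_pow _ (by omega))) hV2 (by
      rw [← hVV, ← add_assoc, hBR, add_assoc, Multiset.map_add, Multiset.sum_add, hB0, zero_add] at hs
      exact hs)
    refine ⟨B + B2, ?_, ?_, ?_⟩
    · rw [Multiset.sum_add, hB2, ← add_assoc, ← hBR, add_assoc, hVV]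
    · intro T hT
      rcases Multiset.mem_add.1 hT with hT | hT
      · exact hB T hT
      · exact hB2m T hT
    · have h1 := crossNum_level hcop _ V1 hV1
      have h2 := kC_blocks_le hCmin B hB
      have h3 := card_le_hSums (p ^ l) (Nat.pow_pos hp.pos) B
        fun x hx => hRV1 x (Multiset.mem_add.2 (Or.inl hx))
      have h4 : kC R + kC V1 = kC B.sum + kC R' := by rw [← kC_add, hBR, kC_add]
      have h5 : kC R' ≤ θ := hCfree _ hR'
      have h6 : (0 : ℝ) < ((p : ℝ) ^ l)⁻¹ := by positivity
      have h7 := mul_le_mul_of_nonneg_left h2 h6.le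
      have h8 : ((p : ℝ) ^ (l + 1))⁻¹ ≤ ((p : ℝ) ^ l)⁻¹ := by
        apply inv_anti₀ (by positivity)
        exact pow_le_pow_right₀ (by exact_mod_cast hp.one_lt.le) (by omega)
      have h9 := mul_le_mul_of_nonneg_left h5 (sub_nonneg.2 h8)
      have h10 : kC B.sum = kC R + kC V1 - kC R' := by linarith
      rw [h10] at h7
      push_cast at h1 h3
      rw [← hVV, crossNum_add, hSums_add, crossNum_add, h1]
      linarith

end blocks

section structure_thm
variable {H C : Type*} [AddCommGroup H] [AddCommGroup C]

theorem card_le_kC (Q : ℕ) (hQ : 0 < Q) (hCord : ∀ c : C, addOrderOf c ∣ Q)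
    (N : Multiset (H × C)) : (Multiset.card N : ℝ) * (Q : ℝ)⁻¹ ≤ kC N := by
  induction N using Multiset.induction_on with
  | empty => simp [kC, crossNum_zero]
  | cons x N ih =>
    unfold kC at ih ⊢
    rw [Multiset.map_cons, crossNum_cons, Multiset.card_cons]
    have h4 : (Q : ℝ)⁻¹ ≤ (addOrderOf x.2 : ℝ)⁻¹ := by
      apply inv_anti₀
      · exact_mod_cast Nat.pos_of_dvd_of_pos (hCord _) hQ
      · exact_mod_cast Nat.le_of_dvd hQ (hCord _)
    push_cast
    linarith

theorem fst_sum_zero {T : Multiset (H × C)} (h : ∀ x ∈ T, x.1 = 0) : T.sum.1 = 0 := by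
  rw [sum_fst]
  apply Multiset.sum_eq_zero
  intro y hy
  obtain ⟨x, hx, rfl⟩ := Multiset.mem_map.1 hy
  exact h x hx

/-- a block all of whose elements have `H`-part of the same order -/
def GoodBlock (p : ℕ) (T : Multiset (H × C)) : Prop :=
  IsMinZeroSum (T.map Prod.snd) ∧ ∃ a : ℕ, ∀ x ∈ T, addOrderOf x.1 = p ^ a

theorem GoodBlock.crossNum_le {p : ℕ} {T : Multiset (H × C)}
    (hcop : ∀ x : H × C, addOrderOf x = addOrderOf x.1 * addOrderOf x.2)
    (hCmin : ∀ S : Multiset C, IsMinZeroSum S → crossNum S ≤ 1) (hT : GoodBlock p T)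
    {a : ℕ} (ha : ∀ x ∈ T, addOrderOf x.1 = p ^ a) : crossNum T ≤ ((p : ℝ) ^ a)⁻¹ := by
  rw [crossNum_level hcop _ T ha]
  push_cast
  exact mul_le_of_le_one_right (by positivity) (hCmin _ hT.1)

theorem good_le {p : ℕ} (hp : p.Prime)
    (hcop : ∀ x : H × C, addOrderOf x = addOrderOf x.1 * addOrderOf x.2)
    (hCmin : ∀ S : Multiset C, IsMinZeroSum S → crossNum S ≤ 1)
    (B : Multiset (Multiset (H × C))) (hB : ∀ T ∈ B, GoodBlock p T) :
    crossNum B.sum ≤ crossNum (hSums B) := by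
  induction B using Multiset.induction_on with
  | empty => simp [hSums, crossNum_zero]
  | cons T B ih =>
    have h2 := ih fun X hX => hB X (by simp [hX])
    have hT := hB T (by simp)
    obtain ⟨a, ha⟩ := hT.2
    have h1 := hT.crossNum_le hcop hCmin ha
    have h3 := card_le_hSums (p ^ a) (Nat.pow_pos hp.pos) {T} (by
      intro x hx
      rw [Multiset.sum_singleton] at hx
      rw [ha x hx])
    have h4 : hSums (T ::ₘ B) = hSums {T} + hSums B := by simp [hSums]
    rw [Multiset.sum_cons, crossNum_add, h4, crossNum_add]
    simp only [Multiset.card_singleton] at h3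
    push_cast at h3
    linarith

theorem mem_blocks_sum {B : Multiset (Multiset (H × C))} {x : H × C} (h : x ∈ B.sum) :
    ∃ T ∈ B, x ∈ T := Multiset.mem_join.1 h

theorem blocks_snd_sum (B : Multiset (Multiset (H × C)))
    (hB : ∀ T ∈ B, IsMinZeroSum (T.map Prod.snd)) : (B.sum.map Prod.snd).sum = 0 := by
  induction B using Multiset.induction_on with
  | empty => simp
  | cons T B ih =>
    rw [Multiset.sum_cons, Multiset.map_add, Multiset.sum_add, (hB T (by simp)).2.1,
      ih fun X hX => hB X (by simp [hX]), add_zero]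

theorem structure_abs (p k Q : ℕ) (hp : p.Prime) (hk : 0 < k) (hQ : 1 < Q) (κ θ : ℝ)
    (hθ : θ = 1 - (Q : ℝ)⁻¹)
    (hCfree : ∀ S : Multiset C, IsZeroSumFree S → crossNum S ≤ θ)
    (hCmin : ∀ S : Multiset C, IsMinZeroSum S → crossNum S ≤ 1)
    (hCord : ∀ c : C, addOrderOf c ∣ Q)
    (hcop : ∀ x : H × C, addOrderOf x = addOrderOf x.1 * addOrderOf x.2)
    (hHord : ∀ h : H, ∃ a ≤ k, addOrderOf h = p ^ a)
    (hHfree : ∀ S : Multiset H, IsZeroSumFree S → crossNum S ≤ κ)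
    (hHmin : ∀ S : Multiset H, IsMinZeroSum S → crossNum S ≤ κ + ((p : ℝ) ^ k)⁻¹)
    (U : Multiset (H × C)) (hU : IsMinZeroSum U)
    (hlow : κ + θ + ((p : ℝ) ^ k)⁻¹ * (Q : ℝ)⁻¹ ≤ crossNum U) (hone : 1 < crossNum U) :
    ∃ (g : H × C) (Up Uq : Multiset (H × C)),
      U = g ::ₘ (Up + Uq) ∧ addOrderOf g.1 = p ^ k ∧ addOrderOf g.2 = Q ∧
        (∀ x ∈ Up, x.2 = 0) ∧ (∀ x ∈ Uq, x.1 = 0) ∧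
        IsZeroSumFree Up ∧ IsZeroSumFree Uq := by
  classical
  have hp0 : (0 : ℝ) < p := by exact_mod_cast hp.pos
  have hp1 : (1 : ℝ) < p := by exact_mod_cast hp.one_lt
  have hQ1 : (1 : ℝ) < Q := by exact_mod_cast hQ
  have hQi : (0 : ℝ) < (Q : ℝ)⁻¹ := by positivity
  have hQi1 : (Q : ℝ)⁻¹ < 1 := inv_lt_one_of_one_lt₀ hQ1
  have hθ1 : θ < 1 := by rw [hθ]; linarith
  have hθ0 : 0 < θ := by rw [hθ]; linarith
  have hci : (0 : ℝ) < ((p : ℝ) ^ k)⁻¹ := by positivity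
  -- the block inequality
  have hBlk : ∀ B : Multiset (Multiset (H × C)), (∀ T ∈ B, IsMinZeroSum (T.map Prod.snd)) →
      B.sum = U → crossNum (hSums B) ≤ κ + ((p : ℝ) ^ k)⁻¹ :=
    fun B hB hBU => hHmin _ (hSums_min U hU B hB hBU)
  let U0 := U.filter fun x => x.1 = 0
  let V0 := U.filter fun x => ¬ x.1 = 0
  have hUV : U0 + V0 = U := Multiset.filter_add_not _ _
  have hU0 : ∀ x ∈ U0, x.1 = 0 := fun x hx => (Multiset.mem_filter.1 hx).2
  have hU0' : ∀ x ∈ U0, addOrderOf x.1 = 1 := fun x hx => by rw [hU0 x hx, addOrderOf_zero]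
  have hV0 : ∀ x ∈ V0, ∃ a, 1 ≤ a ∧ a ≤ k ∧ addOrderOf x.1 = p ^ a := by
    intro x hx
    obtain ⟨a, h1, h2⟩ := hHord x.1
    refine ⟨a, ?_, h1, h2⟩
    by_contra h0
    obtain rfl : a = 0 := by omega
    rw [pow_zero, AddMonoid.addOrderOf_eq_one_iff] at h2
    exact (Multiset.mem_filter.1 hx).2 h2
  have hcU0 : crossNum U0 = kC U0 := by
    have := crossNum_level hcop 1 U0 hU0'
    simpa using this
  have lift0 : ∀ T ≤ U0, (T.map Prod.snd).sum = 0 → T.sum = 0 := by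
    intro T hT hs
    ext
    · exact fst_sum_zero fun x hx => hU0 x (Multiset.mem_of_le hT hx)
    · rw [sum_snd, hs]; rfl
  have hV0ne : V0 ≠ 0 := by
    intro h0
    have hUU : U0 = U := by rw [← hUV, h0, add_zero]
    have hmin : IsMinZeroSum (U.map Prod.snd) := by
      refine ⟨by simpa using hU.1, by rw [← sum_snd, hU.2.1]; rfl, ?_⟩
      intro Y hY h0 hne hs
      obtain ⟨T, hT, rfl⟩ := exists_le_of_le_map _ _ _ hY
      refine hU.2.2 T hT (by rintro rfl; simp at h0) (by rintro rfl; exact hne rfl) ?_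
      exact lift0 T (hUU.symm ▸ hT) hs
    have h1 := hCmin _ hmin
    change kC U ≤ 1 at h1
    rw [← hUU, ← hcU0, hUU] at h1
    linarith
  have hU0free : IsZeroSumFree (U0.map Prod.snd) := by
    intro Y hY h0 hs
    obtain ⟨T, hT, rfl⟩ := exists_le_of_le_map _ _ _ hY
    refine hU.2.2 T (hT.trans ?_) (by rintro rfl; simp at h0) ?_ (lift0 T hT hs)
    · rw [← hUV]; exact Multiset.le_add_right _ _
    · intro hTU
      obtain ⟨x, hx⟩ := Multiset.exists_mem_of_ne_zero hV0ne
      have hxU : x ∈ T := by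
        rw [hTU, ← hUV]; exact Multiset.mem_add.2 (Or.inr hx)
      exact (Multiset.mem_filter.1 hx).2 (hU0 x (Multiset.mem_of_le hT hxU))
  have hUs : (U.map Prod.snd).sum = 0 := by rw [← sum_snd, hU.2.1]; rfl
  have hkU0 : kC U0 = θ := by
    apply le_antisymm (hCfree _ hU0free)
    obtain ⟨B, hBs, hB, hin⟩ := completion p k hp θ hCfree hCmin hcop (k - 1) 1 (by omega) U0 V0
      hU0free (fun x hx => by rw [hU0' x hx]; exact one_dvd _) hV0 (by rw [hUV]; exact hUs)
    have h1 := hBlk B hB (by rw [hBs, hUV])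
    have h2 : crossNum U = kC U0 + crossNum V0 := by rw [← hUV, crossNum_add, hcU0]
    rw [pow_one] at hin
    have h3 : (p : ℝ)⁻¹ < 1 := inv_lt_one_of_one_lt₀ hp1
    have h4 : (Q : ℝ)⁻¹ = 1 - θ := by rw [hθ]; ring
    rw [h4] at hlow
    have h5 : (1 - (p : ℝ)⁻¹) * θ ≤ (1 - (p : ℝ)⁻¹) * kC U0 := by linarith
    exact le_of_mul_le_mul_left h5 (by linarith)
  -- clearing the levels one by one
  have hP : ∀ l, 1 ≤ l → l ≤ k → ∃ (B0 : Multiset (Multiset (H × C))) (V : Multiset (H × C)),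
      U = B0.sum + U0 + V ∧ (∀ T ∈ B0, GoodBlock p T) ∧
      ∀ x ∈ V, ∃ a, l ≤ a ∧ a ≤ k ∧ addOrderOf x.1 = p ^ a := by
    intro l hl
    induction l, hl using Nat.le_induction with
    | base =>
      intro _
      exact ⟨0, V0, by rw [Multiset.sum_zero, zero_add, hUV], by simp, hV0⟩
    | succ l hl ih =>
      intro hlk
      obtain ⟨B0, V, hUB, hB0, hV⟩ := ih (by omega)
      let V1 := V.filter fun x => addOrderOf x.1 = p ^ l
      let V2 := V.filter fun x => ¬ addOrderOf x.1 = p ^ l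
      have hVV : V1 + V2 = V := Multiset.filter_add_not _ _
      have hV1 : ∀ x ∈ V1, addOrderOf x.1 = p ^ l := fun x hx => (Multiset.mem_filter.1 hx).2
      have hV2 : ∀ x ∈ V2, ∃ a, l + 1 ≤ a ∧ a ≤ k ∧ addOrderOf x.1 = p ^ a := by
        intro x hx
        obtain ⟨hx1, hx2⟩ := Multiset.mem_filter.1 hx
        obtain ⟨a, h1, h2, h3⟩ := hV x hx1
        refine ⟨a, ?_, h2, h3⟩
        by_contra hlt
        obtain rfl : a = l := by omega
        exact hx2 h3
      obtain ⟨B1, N, hBN, hB1, hN⟩ := extract V1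
      have hB1g : ∀ T ∈ B1, GoodBlock p T := by
        intro T hT
        refine ⟨hB1 T hT, l, fun x hx => hV1 x ?_⟩
        rw [hBN]
        exact Multiset.mem_add.2 (Or.inl (Multiset.mem_of_le (mem_sum_of_mem hT) hx))
      have hNl : ∀ x ∈ N, addOrderOf x.1 = p ^ l := fun x hx =>
        hV1 x (by rw [hBN]; exact Multiset.mem_add.2 (Or.inr hx))
      obtain ⟨B2, R, hBR, hB2, hR⟩ := extract (U0 + N)
      have hlev : ∀ x ∈ U0 + N, addOrderOf x.1 ∣ p ^ l := by
        intro x hx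
        rcases Multiset.mem_add.1 hx with hx | hx
        · rw [hU0' x hx]; exact one_dvd _
        · rw [hNl x hx]
      rw [hBR] at hlev
      have hUfull : U = B0.sum + B1.sum + B2.sum + (R + V2) := by
        rw [hUB, ← hVV, hBN]
        calc B0.sum + U0 + (B1.sum + N + V2) = B0.sum + B1.sum + (U0 + N) + V2 := by abel
          _ = _ := by rw [hBR]; abel
      have hB0' : ∀ T ∈ B0, IsMinZeroSum (T.map Prod.snd) := fun T hT => (hB0 T hT).1
      obtain ⟨B3, hB3s, hB3, hin⟩ := completion p k hp θ hCfree hCmin hcop (k - (l + 1)) (l + 1)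
        (by omega) R V2 hR (fun x hx =>
          (hlev x (Multiset.mem_add.2 (Or.inr hx))).trans (pow_dvd_pow _ (by omega))) hV2 (by
          have := hUs
          rw [hUfull, Multiset.map_add, Multiset.sum_add, Multiset.map_add, Multiset.sum_add,
            Multiset.map_add, Multiset.sum_add, blocks_snd_sum _ hB0', blocks_snd_sum _ hB1,
            blocks_snd_sum _ hB2] at this
          simpa using this)
      have e1 := hBlk (B0 + B1 + B2 + B3) (by
        intro T hT
        simp only [Multiset.mem_add] at hT
        rcases hT with ((hT | hT) | hT) | hT
        · exact hB0' T hT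
        · exact hB1 T hT
        · exact hB2 T hT
        · exact hB3 T hT) (by
        simp only [Multiset.sum_add]
        rw [hB3s, hUfull])
      simp only [hSums_add, crossNum_add] at e1
      have e2 : crossNum U = crossNum B0.sum + θ + (crossNum B1.sum +
          ((p : ℝ) ^ l)⁻¹ * kC N + crossNum V2) := by
        have := crossNum_level hcop _ N hNl
        push_cast at this
        rw [hUB, ← hVV, hBN]
        simp only [crossNum_add]
        rw [hcU0, hkU0, this]
      have e3 := good_le hp hcop hCmin B0 hB0
      have e4 := good_le hp hcop hCmin B1 hB1g
      have e5 := kC_blocks_le hCmin B2 hB2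
      have e6 := card_le_hSums (p ^ l) (Nat.pow_pos hp.pos) B2
        fun x hx => hlev x (Multiset.mem_add.2 (Or.inl hx))
      have e7 : θ + kC N = kC B2.sum + kC R := by rw [← hkU0, ← kC_add, hBR, kC_add]
      have e8 : kC R ≤ θ := hCfree _ hR
      have e9 : kC N ≤ θ := hCfree _ hN
      have e10 : (Q : ℝ)⁻¹ = 1 - θ := by rw [hθ]; ring
      rw [e10] at hlow
      push_cast at e6
      have ha0 : (0 : ℝ) < ((p : ℝ) ^ l)⁻¹ := by positivity
      have hab : ((p : ℝ) ^ (l + 1))⁻¹ < ((p : ℝ) ^ l)⁻¹ := by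
        apply inv_strictAnti₀ (by positivity)
        exact pow_lt_pow_right₀ hp1 (by omega)
      have f1 : kC N = kC B2.sum + kC R - θ := by linarith
      rw [f1] at e2
      have f2 : ((p : ℝ) ^ l)⁻¹ * ((Multiset.card B2 : ℝ) - kC B2.sum) +
          (((p : ℝ) ^ l)⁻¹ - ((p : ℝ) ^ (l + 1))⁻¹) * (θ - kC R) ≤ 0 := by linarith
      have f3 : 0 ≤ ((p : ℝ) ^ l)⁻¹ * ((Multiset.card B2 : ℝ) - kC B2.sum) :=
        mul_nonneg ha0.le (by linarith)
      have f4 : 0 ≤ (((p : ℝ) ^ l)⁻¹ - ((p : ℝ) ^ (l + 1))⁻¹) * (θ - kC R) :=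
        mul_nonneg (by linarith) (by linarith)
      have f5 : (Multiset.card B2 : ℝ) - kC B2.sum = 0 := by
        rcases mul_eq_zero.1 (le_antisymm (by linarith) f3) with h | h
        · exact absurd h ha0.ne'
        · exact h
      have f6 : θ - kC R = 0 := by
        rcases mul_eq_zero.1 (le_antisymm (by linarith) f4) with h | h
        · linarith
        · exact h
      have f7 : kC N = Multiset.card B2 := by linarith
      have f8 : Multiset.card B2 = 0 := by
        have : (Multiset.card B2 : ℝ) < 1 := by linarith
        have : Multiset.card B2 < 1 := by exact_mod_cast this
        omega
      have f9 := card_le_kC Q (by omega) hCord N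
      have hN0 : N = 0 := by
        rw [f7, f8, Nat.cast_zero] at f9
        by_contra hne
        have : (0 : ℝ) < Multiset.card N := by exact_mod_cast Multiset.card_pos.2 hne
        have := mul_pos this hQi
        linarith
      subst hN0
      refine ⟨B0 + B1, V2, ?_, ?_, hV2⟩
      · rw [hUB, ← hVV, hBN, Multiset.sum_add]; abel
      · intro T hT
        rcases Multiset.mem_add.1 hT with hT | hT
        · exact hB0 T hT
        · exact hB1g T hT
  -- the last level
  obtain ⟨B, g, hUB, hB, hg1, hg2⟩ : ∃ (B : Multiset (Multiset (H × C))) (g : H × C),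
      U = g ::ₘ (B.sum + U0) ∧ (∀ T ∈ B, GoodBlock p T) ∧ addOrderOf g.1 = p ^ k ∧
      addOrderOf g.2 = Q := by
    obtain ⟨B0, V, hUB, hB0, hV⟩ := hP k hk le_rfl
    have hV' : ∀ x ∈ V, addOrderOf x.1 = p ^ k := by
      intro x hx
      obtain ⟨a, h1, h2, h3⟩ := hV x hx
      obtain rfl : a = k := by omega
      exact h3
    obtain ⟨B1, N, hBN, hB1, hN⟩ := extract V
    have hB1g : ∀ T ∈ B1, GoodBlock p T := by
      intro T hT
      refine ⟨hB1 T hT, k, fun x hx => hV' x ?_⟩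
      rw [hBN]
      exact Multiset.mem_add.2 (Or.inl (Multiset.mem_of_le (mem_sum_of_mem hT) hx))
    have hNl : ∀ x ∈ N, addOrderOf x.1 = p ^ k := fun x hx =>
      hV' x (by rw [hBN]; exact Multiset.mem_add.2 (Or.inr hx))
    obtain ⟨B2, R, hBR, hB2, hR⟩ := extract (U0 + N)
    have hB0' : ∀ T ∈ B0, IsMinZeroSum (T.map Prod.snd) := fun T hT => (hB0 T hT).1
    have hUfull : U = B0.sum + B1.sum + B2.sum + R := by
      rw [hUB, hBN]
      calc B0.sum + U0 + (B1.sum + N) = B0.sum + B1.sum + (U0 + N) := by abel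
        _ = _ := by rw [hBR]; abel
    have hR0 : R = 0 := by
      have := hUs
      rw [hUfull, Multiset.map_add, Multiset.sum_add, Multiset.map_add, Multiset.sum_add,
        Multiset.map_add, Multiset.sum_add, blocks_snd_sum _ hB0', blocks_snd_sum _ hB1,
        blocks_snd_sum _ hB2] at this
      simpa using hR.eq_zero (by simpa using this)
    subst hR0
    rw [add_zero] at hBR hUfull
    have hlev : ∀ x ∈ U0 + N, addOrderOf x.1 ∣ p ^ k := by
      intro x hx
      rcases Multiset.mem_add.1 hx with hx | hx
      · rw [hU0' x hx]; exact one_dvd _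
      · rw [hNl x hx]
    rw [hBR] at hlev
    have e1 := hBlk (B0 + B1 + B2) (by
      intro T hT
      simp only [Multiset.mem_add] at hT
      rcases hT with (hT | hT) | hT
      · exact hB0' T hT
      · exact hB1 T hT
      · exact hB2 T hT) (by
      simp only [Multiset.sum_add]
      rw [hUfull])
    simp only [hSums_add, crossNum_add] at e1
    have e2 : crossNum U = crossNum B0.sum + θ + (crossNum B1.sum +
        ((p : ℝ) ^ k)⁻¹ * kC N) := by
      have := crossNum_level hcop _ N hNl
      push_cast at this
      rw [hUB, hBN]
      simp only [crossNum_add]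
      rw [hcU0, hkU0, this]
    have e3 := good_le hp hcop hCmin B0 hB0
    have e4 := good_le hp hcop hCmin B1 hB1g
    have e5 := kC_blocks_le hCmin B2 hB2
    have e6 := card_le_hSums (p ^ k) (Nat.pow_pos hp.pos) B2 fun x hx => hlev x hx
    have e7 : θ + kC N = kC B2.sum := by rw [← hkU0, ← kC_add, hBR]
    have e9 : kC N ≤ θ := hCfree _ hN
    have e10 : (Q : ℝ)⁻¹ = 1 - θ := by rw [hθ]; ring
    have hlow' := hlow
    rw [e10] at hlow'
    push_cast at e6
    have f1 : kC N = kC B2.sum - θ := by linarith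
    rw [f1] at e2
    have f2 : ((p : ℝ) ^ k)⁻¹ * (Multiset.card B2 : ℝ) ≤ ((p : ℝ) ^ k)⁻¹ * kC B2.sum := by linarith
    have f3 := le_of_mul_le_mul_left f2 hci
    have f4 : kC N = Multiset.card B2 - θ := by linarith
    have f5 : Multiset.card B2 = 1 := by
      have g1 : (Multiset.card B2 : ℝ) < 2 := by linarith
      have g2 : Multiset.card B2 < 2 := by exact_mod_cast g1
      have g3 : (0 : ℝ) < Multiset.card B2 := by
        have := kC_nonneg N
        linarith
      have g4 : 0 < Multiset.card B2 := by exact_mod_cast g3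
      omega
    have f6 : kC N = (Q : ℝ)⁻¹ := by rw [f4, f5, hθ]; push_cast; ring
    have f7 := card_le_kC Q (by omega) hCord N
    rw [f6] at f7
    have f8 : (Multiset.card N : ℝ) ≤ 1 := by
      have : (Multiset.card N : ℝ) * (Q : ℝ)⁻¹ ≤ 1 * (Q : ℝ)⁻¹ := by linarith
      exact le_of_mul_le_mul_right this hQi
    have f9 : Multiset.card N ≤ 1 := by exact_mod_cast f8
    have f10 : Multiset.card N = 1 := by
      by_contra hne
      have : Multiset.card N = 0 := by omega
      rw [Multiset.card_eq_zero.1 this] at f6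
      have h0 : kC (0 : Multiset (H × C)) = 0 := by simp [kC, crossNum_zero]
      linarith
    obtain ⟨g, rfl⟩ := Multiset.card_eq_one.1 f10
    refine ⟨B0 + B1, g, ?_, ?_, hNl g (by simp), ?_⟩
    · rw [hUB, hBN, Multiset.sum_add, ← Multiset.singleton_add]; abel
    · intro T hT
      rcases Multiset.mem_add.1 hT with hT | hT
      · exact hB0 T hT
      · exact hB1g T hT
    · simp only [kC, Multiset.map_singleton] at f6
      simp only [crossNum, Multiset.map_singleton, Multiset.sum_singleton] at f6
      exact_mod_cast inv_injective f6
  have hκ : κ ≤ crossNum B.sum := by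
    rw [hUB, crossNum_cons, crossNum_add, hcU0, hkU0, hcop, hg1, hg2] at hlow
    push_cast at hlow
    rw [mul_inv] at hlow
    linarith
  -- `U0` represents every element of `C`
  have hcover : ∀ c : C, ∃ T ≤ U0, (T.map Prod.snd).sum = -c := by
    intro c
    have hnf : ¬ IsZeroSumFree (c ::ₘ U0.map Prod.snd) := by
      intro hf
      have h1 := hCfree _ hf
      rw [crossNum_cons] at h1
      change _ + kC U0 ≤ θ at h1
      have h2 : (0 : ℝ) < (addOrderOf c : ℝ)⁻¹ := by
        have : 0 < addOrderOf c := Nat.pos_of_dvd_of_pos (hCord c) (by omega)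
        positivity
      linarith
    unfold IsZeroSumFree at hnf
    push Not at hnf
    obtain ⟨Y, hY, h0, hs⟩ := hnf
    by_cases hc : c ∈ Y
    · obtain ⟨Y', rfl⟩ := Multiset.exists_cons_of_mem hc
      obtain ⟨T, hT, rfl⟩ := exists_le_of_le_map _ _ _ ((Multiset.cons_le_cons_iff _).1 hY)
      refine ⟨T, hT, ?_⟩
      rw [Multiset.sum_cons] at hs
      exact eq_neg_of_add_eq_zero_right hs
    · exact absurd hs (hU0free Y ((Multiset.le_cons_of_notMem hc).1 hY) h0)
  -- every block is a singleton
  have hsingle : ∀ T ∈ B, ∀ z ∈ T, z.2 = 0 := by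
    intro T hT z hz
    obtain ⟨T', rfl⟩ := Multiset.exists_cons_of_mem hz
    by_cases hT0 : T' = 0
    · subst hT0
      have := (hB _ hT).1.2.1
      simpa using this
    exfalso
    obtain ⟨y, hy⟩ := Multiset.exists_mem_of_ne_zero hT0
    obtain ⟨T'', rfl⟩ := Multiset.exists_cons_of_mem hy
    obtain ⟨B', rfl⟩ := Multiset.exists_cons_of_mem hT
    obtain ⟨a, ha⟩ := (hB _ hT).2
    have h1 := (hB _ hT).crossNum_le hcop hCmin ha
    have h2 := good_le hp hcop hCmin B' fun X hX => hB X (by simp [hX])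
    rw [Multiset.sum_cons, crossNum_add] at hκ
    let D : Multiset (Multiset (H × C)) := {z} ::ₘ {y} ::ₘ B'
    have hD : crossNum (hSums D) = ((p : ℝ) ^ a)⁻¹ + (((p : ℝ) ^ a)⁻¹ + crossNum (hSums B')) := by
      simp only [D, hSums, Multiset.map_cons, crossNum_cons, Multiset.sum_singleton]
      rw [ha z (by simp), ha y (by simp)]
      push_cast
      rfl
    have hpa : (0 : ℝ) < ((p : ℝ) ^ a)⁻¹ := by positivity
    have hnf : ¬ IsZeroSumFree (hSums D) := by
      intro hf
      have := hHfree _ hf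
      linarith
    unfold IsZeroSumFree at hnf
    push Not at hnf
    obtain ⟨Y, hY, h0, hs⟩ := hnf
    obtain ⟨E, hE, rfl⟩ := exists_le_of_le_map _ _ _ hY
    have hDne : ∀ T ∈ D, T ≠ 0 := by
      intro X hX
      simp only [D, Multiset.mem_cons] at hX
      rcases hX with rfl | rfl | hX
      · simp
      · simp
      · rintro rfl
        exact (hB 0 (by simp [hX])).1.1 (by simp)
    have hDle : D.sum ≤ (((z ::ₘ y ::ₘ T'') ::ₘ B').sum) := by
      simp only [D, Multiset.sum_cons]
      rw [← add_assoc]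
      apply add_le_add _ le_rfl
      simp
    have hEle : E.sum ≤ D.sum := by
      obtain ⟨E', hE'⟩ := Multiset.le_iff_exists_add.1 hE
      rw [hE', Multiset.sum_add]
      exact Multiset.le_add_right _ _
    have hE1 : E.sum.sum.1 = 0 := by
      rw [← hs]
      clear hs h0 hE hEle hY
      induction E using Multiset.induction_on with
      | empty => simp
      | cons X E ih => simp [ih]
    have hE0 : E.sum ≠ 0 := by
      intro h3
      have hE0 : E ≠ 0 := by rintro rfl; simp at h0
      obtain ⟨X, hX⟩ := Multiset.exists_mem_of_ne_zero hE0
      have h4 := mem_sum_of_mem hX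
      rw [h3] at h4
      exact hDne X (Multiset.mem_of_le hE hX) (Multiset.le_zero.1 h4)
    obtain ⟨T0, hT0U, hT0s⟩ := hcover E.sum.sum.2
    refine hU.free (g := g) (T := ((z ::ₘ y ::ₘ T'') ::ₘ B').sum + U0) (by rw [← hUB])
      (E.sum + T0) (add_le_add (hEle.trans hDle) hT0U) ?_ ?_
    · intro h3
      exact hE0 (by simpa using (add_eq_zero.1 h3).1)
    · rw [Multiset.sum_add]
      ext
      · rw [Prod.fst_add, hE1, fst_sum_zero fun x hx => hU0 x (Multiset.mem_of_le hT0U hx), add_zero]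
        rfl
      · rw [Prod.snd_add, sum_snd T0, hT0s, add_neg_cancel]
        rfl
  refine ⟨g, B.sum, U0, hUB, hg1, hg2, ?_, hU0, ?_, ?_⟩
  · intro x hx
    obtain ⟨T, hT, hxT⟩ := mem_blocks_sum hx
    exact hsingle T hT x hxT
  · refine hU.free (g := g) ?_
    rw [hUB]
    exact Multiset.cons_le_cons _ (Multiset.le_add_right _ _)
  · refine hU.free (g := g) ?_
    rw [hUB]
    exact Multiset.cons_le_cons _ (Multiset.le_add_left _ _)

end structure_thm

/-- For distinct primes `p, q`, a nontrivial finite abelian `p`-group `H` with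
`exp(H) = p^k`, `m ≥ 1` and `G = H ⊕ C_{q^m}`: every minimal zero-sum sequence `U`
over `G` with `k(U) = K(G)` has the form `U = g + Up + Uq` with `g` a single element
of order `p^k q^m`, `Up` a zero-sum free sequence over `H ⊕ {0}` and `Uq` a zero-sum
free sequence over `{0} ⊕ C_{q^m}`. -/
theorem maximal_minimal_zero_sum_structure_pGroup_prod_zmod
    (p q : ℕ) (hp : p.Prime) (hq : q.Prime) (hpq : p ≠ q)
    (H : Type*) [AddCommGroup H] [Finite H] [Nontrivial H]
    (hH : ∃ n : ℕ, Nat.card H = p ^ n)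
    (k : ℕ) (hk : AddMonoid.exponent H = p ^ k)
    (m : ℕ) (hm : 0 < m)
    (U : Multiset (H × ZMod (q ^ m))) (hU : IsMinZeroSum U)
    (hmax : crossNum U = bigK (H × ZMod (q ^ m))) :
    ∃ (g : H × ZMod (q ^ m)) (Up Uq : Multiset (H × ZMod (q ^ m))),
      U = g ::ₘ (Up + Uq) ∧ addOrderOf g = p ^ k * q ^ m ∧
        (∀ x ∈ Up, x.2 = 0) ∧ (∀ x ∈ Uq, x.1 = 0) ∧
        IsZeroSumFree Up ∧ IsZeroSumFree Uq := by
  classical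
  have hqm : 1 < q ^ m := Nat.one_lt_pow (by omega) hq.one_lt
  have : NeZero (q ^ m) := ⟨by omega⟩
  have hHord : ∀ h : H, ∃ a ≤ k, addOrderOf h = p ^ a := fun h =>
    (Nat.dvd_prime_pow hp).1 (hk ▸ AddMonoid.addOrder_dvd_exponent h)
  obtain ⟨e, he⟩ := AddMonoid.exists_addOrderOf_eq_exponent
    (G := H) AddMonoid.ExponentExists.of_finite
  rw [hk] at he
  have hk0 : 0 < k := by
    rcases Nat.eq_zero_or_pos k with rfl | h
    · exfalso
      obtain ⟨x, hx⟩ := exists_ne (0 : H)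
      obtain ⟨a, ha, hx1⟩ := hHord x
      obtain rfl : a = 0 := by omega
      rw [pow_zero, AddMonoid.addOrderOf_eq_one_iff] at hx1
      exact hx hx1
    · exact h
  have hCord : ∀ c : ZMod (q ^ m), addOrderOf c ∣ q ^ m := by
    intro c
    have := addOrderOf_dvd_natCard c
    rwa [Nat.card_zmod] at this
  have hcop : ∀ x : H × ZMod (q ^ m), addOrderOf x = addOrderOf x.1 * addOrderOf x.2 := by
    intro x
    rw [Prod.addOrderOf]
    apply Nat.Coprime.lcm_eq_mul
    obtain ⟨a, _, ha⟩ := hHord x.1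
    rw [ha]
    apply Nat.Coprime.coprime_dvd_right (hCord _)
    exact Nat.coprime_pow_primes _ _ hp hq hpq
  have hCfree := crossNum_zmod_le q m hq
  have h1ord : addOrderOf (1 : ZMod (q ^ m)) = q ^ m := ZMod.addOrderOf_one _
  have hCmin : ∀ S : Multiset (ZMod (q ^ m)), IsMinZeroSum S → crossNum S ≤ 1 := by
    intro S hS
    have := minZeroSum_le q m hq (1 : ZMod (q ^ m)) h1ord
      (fun c => (Nat.dvd_prime_pow hq).1 (hCord c)) _ hCfree S hS
    linarith
  obtain ⟨S, hS, hSmax⟩ := exists_max_free (G := H)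
  have hHmin := minZeroSum_le p k hp e he hHord (crossNum S) hSmax
  have hp1 : (1 : ℝ) < p := by exact_mod_cast hp.one_lt
  have hp0 : (0 : ℝ) < p := by linarith
  have hq0 : (0 : ℝ) < q := by exact_mod_cast hq.pos
  have hQ2 : ((q : ℝ) ^ m)⁻¹ ≤ 2⁻¹ := by
    apply inv_anti₀ (by norm_num)
    exact_mod_cast hqm
  have hP2 : ((p : ℝ) ^ k)⁻¹ ≤ 2⁻¹ := by
    apply inv_anti₀ (by norm_num)
    have : 1 < p ^ k := Nat.one_lt_pow (by omega) hp.one_lt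
    exact_mod_cast this
  have hpk0 : 0 < p ^ k := Nat.pow_pos hp.pos
  -- the sum of a maximal zero-sum free sequence has maximal order
  have hs : addOrderOf S.sum = p ^ k := by
    have h1 := hHmin _ hS.minZeroSum
    rw [crossNum_cons, addOrderOf_neg] at h1
    obtain ⟨a, ha, hsa⟩ := hHord S.sum
    have h2 : ((addOrderOf S.sum : ℕ) : ℝ)⁻¹ ≤ ((p : ℝ) ^ k)⁻¹ := by linarith
    have h4 : 0 < addOrderOf S.sum := addOrderOf_pos _
    have h3 : ((p : ℝ) ^ k) ≤ (addOrderOf S.sum : ℕ) :=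
      (inv_le_inv₀ (by exact_mod_cast h4) (by positivity)).1 h2
    have h5 : p ^ k ≤ addOrderOf S.sum := by exact_mod_cast h3
    apply le_antisymm _ h5
    rw [hsa]
    exact Nat.pow_le_pow_right hp.pos ha
  have hκ : 1 - ((p : ℝ) ^ k)⁻¹ ≤ crossNum S := by
    have h1 := hSmax _ (isZeroSumFree_replicate (g := e) (n := p ^ k - 1) (by omega))
    rw [crossNum_replicate, he, Nat.cast_sub (by omega)] at h1
    push_cast at h1
    rw [sub_mul, mul_inv_cancel₀ (by positivity), one_mul] at h1
    exact h1
  -- the extremal example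
  let W : Multiset (H × ZMod (q ^ m)) :=
    S.map (fun h => (h, (0 : ZMod (q ^ m)))) + Multiset.replicate (q ^ m - 1) ((0 : H), 1)
  have hmap : ∀ T : Multiset H,
      (T.map (fun h => (h, (0 : ZMod (q ^ m))))).sum = (T.sum, 0) := by
    intro T
    induction T using Multiset.induction_on with
    | empty => rfl
    | cons x T ih => simp [ih]
  have hrep : ∀ n : ℕ, (Multiset.replicate n ((0 : H), (1 : ZMod (q ^ m)))).sum
      = (0, (n : ZMod (q ^ m))) := by
    intro n
    rw [Multiset.sum_replicate]
    ext <;> simp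
  have hWfree : IsZeroSumFree W := by
    intro T hT h0 hTs
    obtain ⟨A, B, hA, hB, rfl⟩ := exists_split_le _ _ _ hT
    obtain ⟨A', hA', rfl⟩ := exists_le_of_le_map _ _ _ hA
    obtain ⟨n, hn, rfl⟩ := Multiset.le_replicate_iff.1 hB
    rw [Multiset.sum_add, hmap, hrep, Prod.mk_add_mk, add_zero, zero_add, Prod.mk_eq_zero] at hTs
    have h1 : A' = 0 := (hS.mono hA').eq_zero hTs.1
    have h2 : n = 0 := by
      have := (ZMod.natCast_eq_zero_iff _ _).1 hTs.2
      exact Nat.eq_zero_of_dvd_of_lt this (by omega)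
    subst h1 h2
    simp at h0
  have hWlow := le_bigK hWfree.minZeroSum
  rw [← hmax] at hWlow
  have hWsum : -W.sum = (-S.sum, 1) := by
    simp only [W]
    rw [Multiset.sum_add, hmap, hrep, Nat.cast_sub (by omega)]
    ext <;> simp
  have hmapc : ∀ T : Multiset H,
      crossNum (T.map (fun h => (h, (0 : ZMod (q ^ m))))) = crossNum T := by
    intro T
    simp [crossNum, hcop]
  have hlow : crossNum S + (1 - ((q : ℝ) ^ m)⁻¹) + ((p : ℝ) ^ k)⁻¹ * ((q : ℝ) ^ m)⁻¹
      ≤ crossNum U := by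
    refine le_trans (le_of_eq ?_) hWlow
    rw [crossNum_cons, hWsum, hcop]
    simp only [W]
    rw [crossNum_add, hmapc, crossNum_replicate, hcop, addOrderOf_neg, hs, h1ord, addOrderOf_zero,
      Nat.cast_sub (by omega)]
    push_cast
    field_simp
    ring
  have hone : 1 < crossNum U := by
    have : 0 < ((p : ℝ) ^ k)⁻¹ * ((q : ℝ) ^ m)⁻¹ := by positivity
    linarith
  obtain ⟨g, Up, Uq, h1, h2, h3, h4⟩ := structure_abs p k (q ^ m) hp hk0 hqm (crossNum S)
    (1 - ((q : ℝ) ^ m)⁻¹) (by push_cast; rfl) hCfree hCmin hCord hcop hHord hSmax hHmin U hU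
    (by push_cast; exact hlow) hone
  exact ⟨g, Up, Uq, h1, by rw [hcop, h2, h3], h4⟩
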